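/- Let P be a reversible Markov matrix (in the closure of reversible matrices with positive stationary distribution) on a state space of size N ≥ 2 with absolute spectral gap 1 - β_⋆ > 0 (eigenvalues may be negative). Then for every 0 < ε < 1, t_mix(ε) ≤ 2(N + 2 log(1/ε) - 1 + sqrt(2(N-2) log(1/ε))) · t_rel. -/

import Mathlib

/-- The closure of the set of Markov matrices reversible with respect to a strictly
positive stationary distribution. -/
def RevClosure (N : ℕ) : Set (Matrix (Fin N) (Fin N) ℝ) :=
  closure {M | (∀ i j, 0 ≤ M i j) ∧ (∀ i, ∑ j, M i j = 1) ∧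
    ∃ p : Fin N → ℝ, (∀ i, 0 < p i) ∧ (∑ i, p i = 1) ∧
      ∀ i j, p i * M i j = p j * M j i}

open Polynomial in
/-- The Newton basis polynomial with the first `l` nodes of `lam`. -/
noncomputable def newtonPoly (lam : ℕ → ℝ) (l : ℕ) : ℝ[X] :=
  ∏ i ∈ Finset.range l, (X - C (lam i))

open Polynomial NNReal in
/-- The convex cone generated by the first `m` Newton basis polynomials. -/
noncomputable def newtonCone (lam : ℕ → ℝ) (m : ℕ) : Submodule ℝ≥0 ℝ[X] :=
  Submodule.span ℝ≥0 (newtonPoly lam '' Set.Iio m)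

section Newton

open Polynomial NNReal

lemma newtonPoly_succ (lam : ℕ → ℝ) (l : ℕ) :
    newtonPoly lam (l + 1) = newtonPoly lam l * (X - C (lam l)) :=
  Finset.prod_range_succ _ _

lemma newtonPoly_monic (lam : ℕ → ℝ) (l : ℕ) : (newtonPoly lam l).Monic :=
  monic_prod_of_monic _ _ fun _ _ => monic_X_sub_C _

lemma newtonPoly_natDegree (lam : ℕ → ℝ) (l : ℕ) : (newtonPoly lam l).natDegree = l := by
  simp [newtonPoly, natDegree_prod_of_monic _ _ fun i _ => monic_X_sub_C (lam i)]

lemma newtonPoly_mem_newtonCone (lam : ℕ → ℝ) {l m : ℕ} (h : l < m) :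
    newtonPoly lam l ∈ newtonCone lam m :=
  Submodule.subset_span ⟨l, h, rfl⟩

lemma newtonCone_mono (lam : ℕ → ℝ) {m n : ℕ} (h : m ≤ n) :
    newtonCone lam m ≤ newtonCone lam n :=
  Submodule.span_mono (Set.image_mono fun _ hx => lt_of_lt_of_le hx h)

lemma C_mul_mem_newtonCone {lam : ℕ → ℝ} {m : ℕ} {p : ℝ[X]} (hp : p ∈ newtonCone lam m)
    {c : ℝ} (hc : 0 ≤ c) : C c * p ∈ newtonCone lam m := by
  have := (newtonCone lam m).smul_mem c.toNNReal hp
  rwa [NNReal.smul_def, Real.coe_toNNReal c hc, smul_eq_C_mul] at this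

lemma mul_X_sub_C_mem_newtonCone {lam : ℕ → ℝ} {m : ℕ} {μ : ℝ} (hμ : ∀ i < m, μ ≤ lam i)
    {p : ℝ[X]} (hp : p ∈ newtonCone lam m) : p * (X - C μ) ∈ newtonCone lam (m + 1) := by
  induction hp using Submodule.span_induction with
  | mem p hp =>
    obtain ⟨l, hl, rfl⟩ := hp
    have hl' : l < m := hl
    have : newtonPoly lam l * (X - C μ)
        = newtonPoly lam (l + 1) + C (lam l - μ) * newtonPoly lam l := by
      rw [newtonPoly_succ, C_sub]; ring
    rw [this]
    exact add_mem (newtonPoly_mem_newtonCone lam (by omega))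
      (C_mul_mem_newtonCone (newtonPoly_mem_newtonCone lam (by omega))
        (sub_nonneg.2 (hμ l hl')))
  | zero => simp
  | add p q _ _ hp hq => rw [add_mul]; exact add_mem hp hq
  | smul c p _ hp => rw [smul_mul_assoc]; exact Submodule.smul_mem _ _ hp

lemma newtonPoly_mem_newtonCone_of_le {lam mu : ℕ → ℝ} {m : ℕ}
    (h : ∀ i j, i ≤ j → j < m → mu j ≤ lam i) : newtonPoly mu m ∈ newtonCone lam (m + 1) := by
  induction m with
  | zero => simpa [newtonPoly] using newtonPoly_mem_newtonCone lam zero_lt_one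
  | succ m ih =>
    rw [newtonPoly_succ]
    exact mul_X_sub_C_mem_newtonCone (fun i hi => h i m (by omega) (by omega))
      (ih fun i j hij hj => h i j hij (by omega))

lemma exists_coeff_of_mem_newtonCone {lam : ℕ → ℝ} {m : ℕ} {p : ℝ[X]}
    (hp : p ∈ newtonCone lam m) :
    ∃ c : ℕ → ℝ, (∀ l, 0 ≤ c l) ∧ p = ∑ l ∈ Finset.range m, C (c l) * newtonPoly lam l := by
  induction hp using Submodule.span_induction with
  | mem p hp =>
    obtain ⟨l, hl, rfl⟩ := hp
    have hl' : l < m := hl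
    refine ⟨fun k => if k = l then 1 else 0, fun k => by dsimp only; split_ifs <;> norm_num, ?_⟩
    rw [Finset.sum_eq_single l] <;> simp +contextual [hl']
  | zero => exact ⟨0, fun _ => le_rfl, by simp⟩
  | add p q _ _ hp hq =>
    obtain ⟨c, hc, rfl⟩ := hp
    obtain ⟨d, hd, rfl⟩ := hq
    exact ⟨c + d, fun l => add_nonneg (hc l) (hd l), by simp [add_mul, Finset.sum_add_distrib]⟩
  | smul a p _ hp =>
    obtain ⟨c, hc, rfl⟩ := hp
    refine ⟨fun l => a * c l, fun l => mul_nonneg a.2 (hc l), ?_⟩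
    rw [NNReal.smul_def, smul_eq_C_mul, Finset.mul_sum]
    simp [mul_assoc]

lemma newtonPoly_coeff_eq_zero {lam : ℕ → ℝ} {m : ℕ} {a : ℕ → ℝ}
    (h : ∑ l ∈ Finset.range m, C (a l) * newtonPoly lam l = 0) : ∀ l < m, a l = 0 := by
  induction m with
  | zero => simp
  | succ m ih =>
    have hm : a m = 0 := by
      have := congrArg (fun p => coeff p m) h
      simp only [finsetSum_coeff, coeff_C_mul, coeff_zero] at this
      rw [Finset.sum_range_succ, Finset.sum_eq_zero, zero_add] at this
      · have h1 := (newtonPoly_monic lam m).coeff_natDegree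
        rw [newtonPoly_natDegree] at h1
        simpa [h1] using this
      · intro l hl
        rw [coeff_eq_zero_of_natDegree_lt (by simpa [newtonPoly_natDegree] using hl), mul_zero]
    rw [Finset.sum_range_succ, hm] at h
    intro l hl
    rcases Nat.lt_succ_iff_lt_or_eq.1 hl with h' | rfl
    · exact ih (by simpa using h) l h'
    · exact hm

lemma coeff_nonneg_of_mem_newtonCone {lam : ℕ → ℝ} {m : ℕ} {a : ℕ → ℝ}
    (h : ∑ l ∈ Finset.range m, C (a l) * newtonPoly lam l ∈ newtonCone lam m) :
    ∀ l < m, 0 ≤ a l := by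
  obtain ⟨c, hc, hp⟩ := exists_coeff_of_mem_newtonCone h
  have := newtonPoly_coeff_eq_zero (lam := lam) (m := m) (a := a - c) (by
    simpa [sub_mul, Finset.sum_sub_distrib, sub_eq_zero] using hp)
  intro l hl
  have h0 := this l hl
  rw [Pi.sub_apply, sub_eq_zero] at h0
  exact h0 ▸ hc l

end Newton

section Interlacing

open Polynomial Matrix

/-- `A = U Λ Uᵀ` with `U` orthogonal and the diagonal `Λ` decreasing. -/
structure SortedDiag {n : ℕ} (A U : Matrix (Fin n) (Fin n) ℝ) (lam : ℕ → ℝ) : Prop where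
  anti : ∀ i j, i ≤ j → j < n → lam j ≤ lam i
  left : Uᵀ * U = 1
  right : U * Uᵀ = 1
  eq : A = U * diagonal (fun i : Fin n => lam i) * Uᵀ

lemma SortedDiag.charpoly_eq {n : ℕ} {A U : Matrix (Fin n) (Fin n) ℝ} {lam : ℕ → ℝ}
    (h : SortedDiag A U lam) : A.charpoly = newtonPoly lam n := by
  rw [h.eq, charpoly_mul_comm, ← mul_assoc, h.left, one_mul, charpoly_diagonal, newtonPoly,
    Finset.prod_range]

lemma exists_sortedDiag {n : ℕ} {A : Matrix (Fin n) (Fin n) ℝ} (hA : A.IsSymm) :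
    ∃ U lam, SortedDiag A U lam ∧ ∀ i, n ≤ i → lam i = 0 := by
  have hH : A.IsHermitian := (conjTranspose_eq_transpose_of_trivial A).trans hA
  set U : Matrix (Fin n) (Fin n) ℝ := hH.eigenvectorUnitary.1
  set d := hH.eigenvalues
  have h1 : Uᵀ * U = 1 := by
    have := Unitary.coe_star_mul_self hH.eigenvectorUnitary
    simpa [star_eq_conjTranspose, conjTranspose_eq_transpose_of_trivial] using this
  have h2 : A = U * diagonal d * Uᵀ := by
    have := hH.spectral_theorem
    simpa [Unitary.conjStarAlgAut_apply, star_eq_conjTranspose,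
      conjTranspose_eq_transpose_of_trivial, Function.comp_def] using this
  set σ : Equiv.Perm (Fin n) := Tuple.sort (fun i => - d i)
  have hσ : Monotone ((fun i => - d i) ∘ σ) := Tuple.monotone_sort _
  have h3 : (U.submatrix id σ)ᵀ * U.submatrix id σ = 1 := by
    rw [transpose_submatrix, ← submatrix_mul _ _ _ _ _ Function.bijective_id, h1]
    simp
  refine ⟨U.submatrix id σ, fun i => if h : i < n then d (σ ⟨i, h⟩) else 0, ⟨?_, h3,
    mul_eq_one_comm.1 h3, ?_⟩, fun i hi => dif_neg (not_lt.2 hi)⟩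
  · intro i j hij hj
    simp only [hj, lt_of_le_of_lt hij hj, dif_pos]
    have := @hσ ⟨i, lt_of_le_of_lt hij hj⟩ ⟨j, hj⟩ hij
    simpa using this
  · have : (diagonal fun i : Fin n => if h : (i : ℕ) < n then d (σ ⟨i, h⟩) else 0)
        = (diagonal d).submatrix σ σ := by
      rw [submatrix_diagonal_equiv]; congr 1; ext i; simp
    rw [this, submatrix_mul_equiv, transpose_submatrix, submatrix_mul_equiv, ← h2]
    simp

lemma dotProduct_orthogonal {n : ℕ} {U : Matrix (Fin n) (Fin n) ℝ} (h : U * Uᵀ = 1)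
    (x : Fin n → ℝ) : (Uᵀ *ᵥ x) ⬝ᵥ (Uᵀ *ᵥ x) = x ⬝ᵥ x := by
  rw [dotProduct_mulVec, vecMul_transpose, mulVec_mulVec, h, one_mulVec]

lemma SortedDiag.quadratic {n : ℕ} {A U : Matrix (Fin n) (Fin n) ℝ} {lam : ℕ → ℝ}
    (h : SortedDiag A U lam) (x : Fin n → ℝ) :
    x ⬝ᵥ A *ᵥ x = ∑ i : Fin n, lam i * (Uᵀ *ᵥ x) i ^ 2 := by
  rw [h.eq, ← mulVec_mulVec, ← mulVec_mulVec, dotProduct_mulVec, ← mulVec_transpose]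
  simp only [dotProduct, mulVec_diagonal]
  exact Finset.sum_congr rfl fun i _ => by ring

/-- One half of Cauchy's interlacing theorem. -/
lemma SortedDiag.interlacing {n : ℕ} {A U : Matrix (Fin (n + 1)) (Fin (n + 1)) ℝ}
    {lam mu : ℕ → ℝ} (hA : SortedDiag A U lam) (p : Fin (n + 1))
    {V : Matrix (Fin n) (Fin n) ℝ}
    (hB : SortedDiag (A.submatrix p.succAbove p.succAbove) V mu) (i : ℕ) (hi : i < n) :
    mu i ≤ lam i := by
  let ext : (Fin (i + 1) → ℝ) →ₗ[ℝ] (Fin n → ℝ) :=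
    Function.ExtendByZero.linearMap ℝ (Fin.castLE (Nat.succ_le_of_lt hi))
  let ins : (Fin n → ℝ) →ₗ[ℝ] (Fin (n + 1) → ℝ) :=
    Function.ExtendByZero.linearMap ℝ p.succAbove
  let res : (Fin (n + 1) → ℝ) →ₗ[ℝ] (Fin i → ℝ) :=
    LinearMap.funLeft ℝ ℝ (Fin.castLE (by omega))
  let L := res ∘ₗ Uᵀ.mulVecLin ∘ₗ ins ∘ₗ V.mulVecLin ∘ₗ ext
  obtain ⟨c, hc, hc0⟩ := Submodule.exists_mem_ne_zero_of_ne_bot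
    (L.ker_ne_bot_of_finrank_lt (by simp))
  have hinj : Function.Injective (Fin.castLE (Nat.succ_le_of_lt hi)) := Fin.castLE_injective _
  set z := ext c with hz
  have hzc : ∀ j, z (Fin.castLE (Nat.succ_le_of_lt hi) j) = c j := fun j => hinj.extend_apply _ _ _
  have hz0 : ∀ j : Fin n, i < j → z j = 0 := by
    intro j hj
    refine Function.extend_apply' _ _ _ ?_
    rintro ⟨k, rfl⟩
    simp at hj
    omega
  set y := V *ᵥ z with hy
  set x := ins y with hx
  have hxs : ∀ j, x (p.succAbove j) = y j := fun j =>
    (Fin.succAbove_right_injective).extend_apply _ _ _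
  have hxp : x p = 0 := by
    refine Function.extend_apply' _ _ _ ?_
    rintro ⟨k, hk⟩
    exact Fin.succAbove_ne p k hk
  have hxx : x ⬝ᵥ x = y ⬝ᵥ y := by
    simp [dotProduct, Fin.sum_univ_succAbove _ p, hxp, hxs]
  have hxA : x ⬝ᵥ A *ᵥ x = y ⬝ᵥ (A.submatrix p.succAbove p.succAbove) *ᵥ y := by
    simp [dotProduct, mulVec, Fin.sum_univ_succAbove _ p, hxp, hxs]
  have hVy : Vᵀ *ᵥ y = z := by rw [hy, mulVec_mulVec, hB.left, one_mulVec]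
  have hyy : y ⬝ᵥ y = z ⬝ᵥ z := by rw [← dotProduct_orthogonal hB.right, hVy]
  have hpos : 0 < z ⬝ᵥ z := by
    have hzne : z ≠ 0 := fun h0 => hc0 (funext fun j => by rw [← hzc, h0]; rfl)
    exact lt_of_le_of_ne (Finset.sum_nonneg fun j _ => mul_self_nonneg _)
      (fun h0 => hzne (dotProduct_self_eq_zero.1 h0.symm))
  have hlow : mu i * (z ⬝ᵥ z) ≤ x ⬝ᵥ A *ᵥ x := by
    rw [hxA, hB.quadratic, hVy, dotProduct, Finset.mul_sum]
    refine Finset.sum_le_sum fun j _ => ?_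
    rcases le_or_gt (j : ℕ) i with hj | hj
    · rw [← sq]
      exact mul_le_mul_of_nonneg_right (hB.anti _ _ hj hi) (sq_nonneg _)
    · simp [hz0 j hj]
  have hup : x ⬝ᵥ A *ᵥ x ≤ lam i * (z ⬝ᵥ z) := by
    rw [← hyy, ← hxx, ← dotProduct_orthogonal hA.right, hA.quadratic, dotProduct, Finset.mul_sum]
    refine Finset.sum_le_sum fun j _ => ?_
    rcases lt_or_ge (j : ℕ) i with hj | hj
    · have : (Uᵀ *ᵥ x) j = 0 := congrFun (LinearMap.mem_ker.1 hc) ⟨j, hj⟩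
      simp [this]
    · rw [← sq]
      exact mul_le_mul_of_nonneg_right (hA.anti _ _ hj j.2) (sq_nonneg _)
  exact le_of_mul_le_mul_right (hlow.trans hup) hpos

end Interlacing

section MicchelliWilloughby

open Polynomial Matrix

lemma charmatrix_submatrix_injective {m n : Type*} [Fintype m] [DecidableEq m] [Fintype n]
    [DecidableEq n] (A : Matrix n n ℝ) {f : m → n} (hf : Function.Injective f) :
    (charmatrix A).submatrix f f = charmatrix (A.submatrix f f) := by
  ext1 i j
  simp [charmatrix_apply, diagonal_apply, hf.eq_iff]

lemma adjugate_charmatrix_diag {n : ℕ} (A : Matrix (Fin (n + 1)) (Fin (n + 1)) ℝ)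
    (p : Fin (n + 1)) :
    adjugate (charmatrix A) p p = (A.submatrix p.succAbove p.succAbove).charpoly := by
  rw [adjugate_fin_succ_eq_det_submatrix,
    charmatrix_submatrix_injective A Fin.succAbove_right_injective, ← two_mul]
  simp [charpoly]

lemma adjugate_charmatrix_offDiag {n : ℕ} (A : Matrix (Fin (n + 1)) (Fin (n + 1)) ℝ)
    (p : Fin (n + 1)) (q : Fin n) :
    adjugate (charmatrix A) p (p.succAbove q) =
      ∑ k, C (A p (p.succAbove k)) *
        adjugate (charmatrix (A.submatrix p.succAbove p.succAbove)) k q := by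
  set B := A.submatrix p.succAbove p.succAbove with hB
  set r : Fin n → ℝ[X] := fun k => adjugate (charmatrix A) p (p.succAbove k) with hr
  set v : Fin n → ℝ[X] := fun k => C (A p (p.succAbove k)) with hv
  have h1 : r ᵥ* charmatrix B = B.charpoly • v := by
    ext1 k
    have h := congrFun (congrFun (adjugate_mul (charmatrix A)) p) (p.succAbove k)
    rw [mul_apply, Fin.sum_univ_succAbove _ p, adjugate_charmatrix_diag,
      charmatrix_apply_ne _ _ _ (Fin.succAbove_ne p k).symm, Matrix.smul_apply,
      one_apply_ne (Fin.succAbove_ne p k).symm, smul_zero] at h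
    have h2 : (r ᵥ* charmatrix B) k
        = ∑ i, adjugate (charmatrix A) p (p.succAbove i) *
          charmatrix A (p.succAbove i) (p.succAbove k) := by
      rw [hB, ← charmatrix_submatrix_injective A Fin.succAbove_right_injective]
      rfl
    rw [h2, Pi.smul_apply, smul_eq_mul]
    linear_combination h
  have h2 : B.charpoly • r = B.charpoly • (v ᵥ* adjugate (charmatrix B)) := by
    rw [← smul_vecMul, ← h1, vecMul_vecMul, mul_adjugate, charpoly, vecMul_smul, vecMul_one]
  have h3 := congrFun h2 q
  exact mul_left_cancel₀ (charpoly_monic B).ne_zero h3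

lemma adjugate_charmatrix_mem_newtonCone {n : ℕ} {A U : Matrix (Fin n) (Fin n) ℝ}
    (hA : A.IsSymm) (hA0 : ∀ i j, 0 ≤ A i j) {lam₀ lam : ℕ → ℝ} (hU : SortedDiag A U lam₀)
    (h : ∀ i j, i ≤ j → j < n → lam₀ j ≤ lam i) (p q : Fin n) :
    adjugate (charmatrix A) p q ∈ newtonCone lam n := by
  induction n generalizing lam₀ with
  | zero => exact p.elim0
  | succ n ih =>
    have hB : (A.submatrix p.succAbove p.succAbove).IsSymm := hA.submatrix _
    obtain ⟨V, mu, hV, -⟩ := exists_sortedDiag hB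
    have hmu : ∀ i j, i ≤ j → j < n → mu j ≤ lam i := fun i j hij hj =>
      (hU.interlacing p hV j hj).trans (h i j hij (by omega))
    rcases Fin.eq_self_or_eq_succAbove p q with rfl | ⟨q, rfl⟩
    · rw [adjugate_charmatrix_diag, hV.charpoly_eq]
      exact newtonPoly_mem_newtonCone_of_le hmu
    · rw [adjugate_charmatrix_offDiag]
      exact sum_mem fun k _ => C_mul_mem_newtonCone
        (newtonCone_mono lam n.le_succ (ih hB (fun _ _ => hA0 _ _) hV hmu k q)) (hA0 _ _)

/-- The product of `A - lam i` over `l ≤ i < n`. -/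
noncomputable def tailProd {n : ℕ} (A : Matrix (Fin n) (Fin n) ℝ) (lam : ℕ → ℝ) (l : ℕ) :
    Matrix (Fin n) (Fin n) ℝ :=
  aeval A (∏ i ∈ Finset.Ico l n, (X - C (lam i)))

lemma tailProd_self {n : ℕ} (A : Matrix (Fin n) (Fin n) ℝ) (lam : ℕ → ℝ) :
    tailProd A lam n = 1 := by
  simp [tailProd]

lemma tailProd_zero {n : ℕ} {A : Matrix (Fin n) (Fin n) ℝ} {lam : ℕ → ℝ}
    (h : A.charpoly = newtonPoly lam n) : tailProd A lam 0 = 0 := by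
  rw [tailProd, Nat.Ico_zero_eq_range, ← newtonPoly, ← h, aeval_self_charpoly]

lemma tailProd_eq {n : ℕ} (A : Matrix (Fin n) (Fin n) ℝ) (lam : ℕ → ℝ) {l : ℕ} (hl : l < n) :
    tailProd A lam l = A * tailProd A lam (l + 1) - lam l • tailProd A lam (l + 1) := by
  rw [tailProd, Finset.prod_eq_prod_Ico_succ_bot hl, map_mul, ← tailProd, map_sub, aeval_X,
    aeval_C, sub_mul, Algebra.algebraMap_eq_smul_one, smul_mul_assoc, one_mul]

lemma adjugate_charmatrix_eq_sum {n : ℕ} {A : Matrix (Fin n) (Fin n) ℝ} {lam : ℕ → ℝ}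
    (h : A.charpoly = newtonPoly lam n) :
    adjugate (charmatrix A) =
      ∑ l ∈ Finset.range n, newtonPoly lam l • (tailProd A lam (l + 1)).map C := by
  set S := ∑ l ∈ Finset.range n, newtonPoly lam l • (tailProd A lam (l + 1)).map C with hS
  have hstep : ∀ l ∈ Finset.range n,
      charmatrix A * (newtonPoly lam l • (tailProd A lam (l + 1)).map C)
        = newtonPoly lam (l + 1) • (tailProd A lam (l + 1)).map C
          - newtonPoly lam l • (tailProd A lam l).map C := by
    intro l hl
    rw [tailProd_eq A lam (Finset.mem_range.1 hl), newtonPoly_succ]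
    set G := tailProd A lam (l + 1)
    have h1 : charmatrix A * G.map C = (X : ℝ[X]) • G.map C - (A * G).map C := by
      rw [charmatrix, sub_mul, Matrix.map_mul]
      simp [← smul_eq_diagonal_mul]
    have h2 : (A * G - lam l • G).map (C : ℝ → ℝ[X])
        = (A * G).map C - C (lam l) • G.map C := by
      ext1 i j
      simp only [map_apply, Matrix.sub_apply, Matrix.smul_apply, smul_eq_mul, C_sub, C_mul]
    rw [mul_smul_comm, h1, h2]
    ext1 i j
    simp only [Matrix.smul_apply, Matrix.sub_apply, smul_eq_mul]
    ring
  have hmul : charmatrix A * S = A.charpoly • 1 := by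
    rw [hS, Finset.mul_sum, Finset.sum_congr rfl hstep,
      Finset.sum_range_sub (fun l => newtonPoly lam l • (tailProd A lam l).map C),
      tailProd_self, tailProd_zero h, ← h]
    simp
  have hc : A.charpoly • S = A.charpoly • adjugate (charmatrix A) := by
    rw [← one_mul S, ← smul_mul_assoc, charpoly, ← adjugate_mul, mul_assoc, hmul, charpoly,
      mul_smul_comm, mul_one]
  ext1 i j
  exact (mul_left_cancel₀ (charpoly_monic A).ne_zero (congrFun (congrFun hc i) j)).symm

/-- The Micchelli–Willoughby theorem. -/
lemma SortedDiag.tailProd_nonneg {n : ℕ} {A U : Matrix (Fin n) (Fin n) ℝ} {lam : ℕ → ℝ}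
    (hU : SortedDiag A U lam) (hA : A.IsSymm) (hA0 : ∀ i j, 0 ≤ A i j) {l : ℕ} (hl : l < n)
    (i j : Fin n) : 0 ≤ tailProd A lam (l + 1) i j := by
  have h := adjugate_charmatrix_mem_newtonCone hA hA0 hU hU.anti i j
  rw [adjugate_charmatrix_eq_sum hU.charpoly_eq, Matrix.sum_apply] at h
  refine coeff_nonneg_of_mem_newtonCone (lam := lam)
    (a := fun l => tailProd A lam (l + 1) i j) ?_ l hl
  simpa [mul_comm] using h

end MicchelliWilloughby

section Closure

open Polynomial Matrix

lemma aeval_conj {n : ℕ} {D E X : Matrix (Fin n) (Fin n) ℝ} (h : E * D = 1) (p : ℝ[X]) :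
    aeval (D * X * E) p = D * aeval X p * E := by
  have h' : D * E = 1 := mul_eq_one_comm.1 h
  induction p using Polynomial.induction_on' with
  | add p q hp hq => simp [hp, hq, mul_add, add_mul]
  | monomial k a =>
    have hpow : (D * X * E) ^ k = D * X ^ k * E := by
      induction k with
      | zero => simp [h']
      | succ k ih =>
        rw [pow_succ, ih, pow_succ]
        calc D * X ^ k * E * (D * X * E) = D * X ^ k * (E * D) * X * E := by
              simp only [mul_assoc]
          _ = _ := by rw [h, mul_one]; simp only [mul_assoc]
    simp [aeval_monomial, hpow, Algebra.algebraMap_eq_smul_one]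

lemma trace_mul_self_le {n : ℕ} {M : Matrix (Fin n) (Fin n) ℝ} (h0 : ∀ i j, 0 ≤ M i j)
    (h1 : ∀ i, ∑ j, M i j = 1) : (M * M).trace ≤ n := by
  have hle : ∀ i j, M i j ≤ 1 := fun i j =>
    (Finset.single_le_sum (fun k _ => h0 i k) (Finset.mem_univ j)).trans_eq (h1 i)
  calc (M * M).trace = ∑ i, ∑ j, M i j * M j i := by simp [trace, mul_apply]
    _ ≤ ∑ i, ∑ j, M i j := Finset.sum_le_sum fun i _ => Finset.sum_le_sum fun j _ =>
        mul_le_of_le_one_right (h0 i j) (hle j i)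
    _ = n := by simp [h1]

lemma SortedDiag.diag_eq {n : ℕ} {A U : Matrix (Fin n) (Fin n) ℝ} {lam : ℕ → ℝ}
    (h : SortedDiag A U lam) : Uᵀ * A * U = diagonal (fun i : Fin n => lam i) := by
  calc Uᵀ * A * U
      = (Uᵀ * U) * diagonal (fun i : Fin n => lam i) * (Uᵀ * U) := by
        rw [h.eq]; simp only [mul_assoc]
    _ = _ := by rw [h.left, one_mul, mul_one]

lemma SortedDiag.nonneg {n : ℕ} {A U : Matrix (Fin n) (Fin n) ℝ} {lam : ℕ → ℝ}
    (hA : A.IsSymm) (h : SortedDiag (A * A) U lam) (i : Fin n) : 0 ≤ lam i := by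
  have h1 : (A * U)ᵀ * (A * U) = diagonal (fun i : Fin n => lam i) := by
    rw [← h.diag_eq, transpose_mul, hA.eq]; simp only [mul_assoc]
  have h2 := congrFun (congrFun h1 i) i
  rw [diagonal_apply_eq, mul_apply] at h2
  rw [← h2]
  exact Finset.sum_nonneg fun k _ => mul_self_nonneg _

lemma exists_nodes_of_reversible {n : ℕ} {M : Matrix (Fin n) (Fin n) ℝ} (h0 : ∀ i j, 0 ≤ M i j)
    (h1 : ∀ i, ∑ j, M i j = 1) {p : Fin n → ℝ} (hp : ∀ i, 0 < p i)
    (hrev : ∀ i j, p i * M i j = p j * M j i) :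
    ∃ lam : ℕ → ℝ, (∀ i, lam i ∈ Set.Icc (0 : ℝ) n) ∧ (∀ i j, i ≤ j → j < n → lam j ≤ lam i) ∧
      (M * M).charpoly = newtonPoly lam n ∧
      ∀ l < n, ∀ i j, 0 ≤ tailProd (M * M) lam (l + 1) i j := by
  set D : Matrix (Fin n) (Fin n) ℝ := diagonal fun i => √(p i)
  set E : Matrix (Fin n) (Fin n) ℝ := diagonal fun i => (√(p i))⁻¹
  have hs : ∀ i, 0 < √(p i) := fun i => Real.sqrt_pos.2 (hp i)
  have hED : E * D = 1 := by
    simp only [D, E, diagonal_mul_diagonal, inv_mul_cancel₀ (hs _).ne', diagonal_one]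
  have hDE : D * E = 1 := mul_eq_one_comm.1 hED
  set A := D * M * E with hAdef
  have hAij : ∀ i j, A i j = √(p i) * M i j * (√(p j))⁻¹ := fun i j => by
    simp [A, D, E, mul_diagonal, diagonal_mul]
  have hA0 : ∀ i j, 0 ≤ A i j := fun i j => by
    rw [hAij]
    exact mul_nonneg (mul_nonneg (hs i).le (h0 i j)) (inv_nonneg.2 (hs j).le)
  have hA : A.IsSymm := by
    ext i j
    rw [transpose_apply, hAij, hAij, ← div_eq_mul_inv, ← div_eq_mul_inv,
      div_eq_div_iff (hs i).ne' (hs j).ne']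
    have := hrev i j
    nth_rewrite 1 [← Real.mul_self_sqrt (hp i).le] at this
    rw [← Real.mul_self_sqrt (hp j).le] at this
    linear_combination -this
  have hAA : A * A = D * (M * M) * E := by
    calc A * A = D * M * (E * D) * M * E := by rw [hAdef]; simp only [mul_assoc]
      _ = _ := by rw [hED, mul_one]; simp only [mul_assoc]
  have hMM : M * M = E * (A * A) * D := by
    calc M * M = (E * D) * (M * M) * (E * D) := by rw [hED, one_mul, mul_one]
      _ = _ := by rw [hAA]; simp only [mul_assoc]
  have hSs : (A * A).IsSymm := by rw [IsSymm, transpose_mul, hA.eq]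
  have hS0 : ∀ i j, 0 ≤ (A * A) i j := fun i j => by
    rw [mul_apply]; exact Finset.sum_nonneg fun k _ => mul_nonneg (hA0 i k) (hA0 k j)
  obtain ⟨U, lam, hU, hlam⟩ := exists_sortedDiag hSs
  have hchar : (M * M).charpoly = (A * A).charpoly := by
    rw [hAA, charpoly_mul_comm (D * (M * M)), ← mul_assoc, hED, one_mul]
  have htrace : ∑ i : Fin n, lam i = (M * M).trace := by
    rw [← trace_diagonal (fun i : Fin n => lam i), ← hU.diag_eq, trace_mul_comm, ← mul_assoc,
      hU.right, one_mul, hAA, trace_mul_comm (D * (M * M)), ← mul_assoc, hED, one_mul]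
  refine ⟨lam, fun i => ?_, hU.anti, hchar.trans hU.charpoly_eq, fun l hl i j => ?_⟩
  · rcases lt_or_ge i n with hi | hi
    · refine ⟨hU.nonneg hA ⟨i, hi⟩, ?_⟩
      refine le_trans ?_ (htrace.trans_le (trace_mul_self_le h0 h1))
      exact Finset.single_le_sum (f := fun i : Fin n => lam i) (fun k _ => hU.nonneg hA k)
        (Finset.mem_univ ⟨i, hi⟩)
    · simp [hlam i hi]
  · have := hU.tailProd_nonneg hSs hS0 hl i j
    rw [tailProd, hMM, aeval_conj hDE, ← tailProd, mul_diagonal, diagonal_mul]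
    exact mul_nonneg (mul_nonneg (inv_nonneg.2 (hs i).le) this) (hs j).le

lemma continuous_tailProd (n l : ℕ) (hl : l ≤ n) :
    Continuous fun q : (ℕ → ℝ) × Matrix (Fin n) (Fin n) ℝ => tailProd (q.2 * q.2) q.1 l := by
  induction hl using Nat.decreasingInduction with
  | self => simpa only [tailProd_self] using continuous_const
  | of_succ k hk ih =>
    simp only [tailProd_eq _ _ hk]
    fun_prop

lemma exists_nodes_of_mem_revClosure {n : ℕ} {P : Matrix (Fin n) (Fin n) ℝ}
    (hP : P ∈ RevClosure n) :
    (∀ i, ∑ j, P i j = 1) ∧ ∃ lam : ℕ → ℝ, (∀ i j, i ≤ j → j < n → lam j ≤ lam i) ∧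
      (P * P).charpoly = newtonPoly lam n ∧
      ∀ l < n, ∀ i j, 0 ≤ tailProd (P * P) lam (l + 1) i j := by
  let F : Set ((ℕ → Set.Icc (0 : ℝ) n) × Matrix (Fin n) (Fin n) ℝ) := {q |
    (∀ i, ∑ j, q.2 i j = 1) ∧ (∀ i j, i ≤ j → j < n → (q.1 j : ℝ) ≤ q.1 i) ∧
    (∀ x : ℝ, (scalar (Fin n) x - q.2 * q.2).det = ∏ i ∈ Finset.range n, (x - q.1 i)) ∧
    ∀ l < n, ∀ i j, 0 ≤ tailProd (q.2 * q.2) (fun k => q.1 k) (l + 1) i j}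
  have hF : IsClosed F := by
    simp only [F, Set.ofPred_and, Set.ofPred_forall]
    refine IsClosed.inter ?_ (IsClosed.inter ?_ (IsClosed.inter ?_ ?_))
    · exact isClosed_iInter fun i => isClosed_eq (by fun_prop) continuous_const
    · exact isClosed_iInter fun i => isClosed_iInter fun j => isClosed_iInter fun _ =>
        isClosed_iInter fun _ => isClosed_le (by fun_prop) (by fun_prop)
    · exact isClosed_iInter fun x => isClosed_eq (by fun_prop) (by fun_prop)
    · refine isClosed_iInter fun l => isClosed_iInter fun hl => isClosed_iInter fun i =>
        isClosed_iInter fun j => isClosed_le continuous_const ?_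
      exact ((continuous_tailProd n (l + 1) hl).comp (f := fun q :
        (ℕ → Set.Icc (0 : ℝ) n) × Matrix (Fin n) (Fin n) ℝ => ((fun k => (q.1 k : ℝ)), q.2))
        (by fun_prop)).matrix_elem i j
  have hsub : RevClosure n ⊆ Prod.snd '' F := by
    refine closure_minimal ?_ (isClosedMap_snd_of_compactSpace F hF)
    rintro M ⟨h0, h1, p, hp, -, hrev⟩
    obtain ⟨lam, hI, ha, hc, ht⟩ := exists_nodes_of_reversible h0 h1 hp hrev
    refine ⟨(fun k => ⟨lam k, hI k⟩, M), ⟨h1, ha, fun x => ?_, ht⟩, rfl⟩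
    rw [← eval_charpoly, hc, newtonPoly, eval_prod]
    simp
  obtain ⟨⟨lam, P⟩, ⟨h1, ha, hc, ht⟩, rfl⟩ := hsub hP
  refine ⟨h1, fun k => lam k, ha, Polynomial.funext fun x => ?_, ht⟩
  rw [eval_charpoly, newtonPoly, eval_prod, hc]
  simp

end Closure

section Mixing

open Polynomial Matrix

lemma charpoly_mul_self {n : ℕ} {P : Matrix (Fin n) (Fin n) ℝ} {β : Fin n → ℝ}
    (h : P.charpoly = ∏ j, (X - C (β j))) : (P * P).charpoly = ∏ j, (X - C (β j ^ 2)) := by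
  refine eq_of_infinite_eval_eq _ _ ((Set.Ici_infinite (0 : ℝ)).mono fun y hy => ?_)
  obtain ⟨x, rfl⟩ : ∃ x : ℝ, x * x = y := ⟨√y, Real.mul_self_sqrt hy⟩
  have hdet : ∀ t : ℝ, (scalar (Fin n) t - P).det = ∏ j, (t - β j) := fun t => by
    rw [← eval_charpoly, h, eval_prod]; simp
  have hfac : scalar (Fin n) (x * x) - P * P
      = -((scalar (Fin n) x - P) * (scalar (Fin n) (-x) - P)) := by
    have hc : P * scalar (Fin n) x = scalar (Fin n) x * P :=
      (scalar_commute x (fun _ => mul_comm _ _) P).symm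
    rw [map_mul, map_neg, sub_mul, mul_sub, mul_sub, mul_neg, mul_neg, hc]
    abel
  rw [Set.mem_ofPred_eq, eval_charpoly, hfac, det_neg, det_mul, hdet, hdet, eval_prod,
    Fintype.card_fin, ← Finset.prod_mul_distrib, ← Fin.prod_const, ← Finset.prod_mul_distrib]
  refine Finset.prod_congr rfl fun j _ => ?_
  simp
  ring

lemma nodes_eq {n : ℕ} {lam : ℕ → ℝ} (hanti : ∀ i j, i ≤ j → j < n + 1 → lam j ≤ lam i)
    {γ : Fin n → ℝ} {r : ℝ} (hγ0 : ∀ j, 0 ≤ γ j) (hγ : ∀ j, γ j ≤ r) (hr : r < 1)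
    (h : newtonPoly lam (n + 1) = (X - C 1) * ∏ j, (X - C (γ j))) :
    lam 0 = 1 ∧ ∀ i < n, 0 ≤ lam (i + 1) ∧ lam (i + 1) ≤ r := by
  have hroot : ∀ i < n + 1, lam i = 1 ∨ (0 ≤ lam i ∧ lam i ≤ r) := by
    intro i hi
    have h1 : (newtonPoly lam (n + 1)).eval (lam i) = 0 := by
      rw [newtonPoly, eval_prod]
      exact Finset.prod_eq_zero (Finset.mem_range.2 hi) (by simp)
    rw [h, eval_mul, mul_eq_zero, eval_prod, Finset.prod_eq_zero_iff] at h1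
    rcases h1 with h1 | ⟨j, -, h1⟩
    · left; simpa [sub_eq_zero] using h1
    · right
      have : lam i = γ j := by simpa [sub_eq_zero] using h1
      exact this ▸ ⟨hγ0 j, hγ j⟩
  have h0 : lam 0 = 1 := by
    have h1 : (newtonPoly lam (n + 1)).eval 1 = 0 := by rw [h]; simp
    rw [newtonPoly, eval_prod, Finset.prod_eq_zero_iff] at h1
    obtain ⟨i, hi, h1⟩ := h1
    have hi1 : lam i = 1 := by
      rw [eval_sub, eval_X, eval_C, sub_eq_zero] at h1; exact h1.symm
    have hle := hanti 0 i (Nat.zero_le _) (Finset.mem_range.1 hi)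
    rcases hroot 0 (by omega) with h2 | h2
    · exact h2
    · linarith [h2.2]
  refine ⟨h0, fun i hi => (hroot (i + 1) (by omega)).resolve_left fun hi1 => ?_⟩
  rw [newtonPoly, Finset.prod_range_succ', h0, mul_comm] at h
  have h2 := congrArg (eval 1) (mul_left_cancel₀ (X_sub_C_ne_zero 1) h)
  rw [eval_prod, eval_prod, Finset.prod_eq_zero (Finset.mem_range.2 hi) (by simp [hi1])] at h2
  obtain ⟨j, -, hj⟩ := Finset.prod_eq_zero_iff.1 h2.symm
  have : γ j = 1 := by
    rw [eval_sub, eval_X, eval_C, sub_eq_zero] at hj; exact hj.symm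
  linarith [hγ j]

lemma fixed_eq_const {n : ℕ} {M : Matrix (Fin (n + 1)) (Fin (n + 1)) ℝ} {lam : ℕ → ℝ}
    (hchar : M.charpoly = newtonPoly lam (n + 1)) (h0 : lam 0 = 1)
    (hlam : ∀ i < n, lam (i + 1) ≠ 1) (hM : ∀ i, ∑ j, M i j = 1) {h : Fin (n + 1) → ℝ}
    (hh : M *ᵥ h = h) (i j : Fin (n + 1)) : h i = h j := by
  have hone : M *ᵥ 1 = 1 := by ext k; simp [mulVec, dotProduct, hM]
  have hmult : M.charpoly.rootMultiplicity 1 ≤ 1 := by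
    by_contra! hlt
    have hdvd := (le_rootMultiplicity_iff (charpoly_monic M).ne_zero).1 (Nat.succ_le_of_lt hlt)
    rw [hchar, newtonPoly, Finset.prod_range_succ', h0, mul_comm, pow_succ,
      pow_one] at hdvd
    have hroot := dvd_iff_isRoot.1 ((mul_dvd_mul_iff_left (X_sub_C_ne_zero 1)).1 hdvd)
    rw [IsRoot, eval_prod, Finset.prod_eq_zero_iff] at hroot
    obtain ⟨k, hk, hk'⟩ := hroot
    exact hlam k (Finset.mem_range.1 hk) (by
      rw [eval_sub, eval_X, eval_C, sub_eq_zero] at hk'; exact hk'.symm)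
  rw [← charpoly_toLin'] at hmult
  obtain ⟨v, hv⟩ := finrank_le_one_iff.1 ((LinearMap.finrank_eigenspace_le _ 1).trans hmult)
  have hmem : ∀ w, M *ᵥ w = w → ∃ c : ℝ, c • v.1 = w := fun w hw => by
    obtain ⟨c, hc⟩ := hv ⟨w, Module.End.mem_eigenspace_iff.2 (by simpa using hw)⟩
    exact ⟨c, congrArg Subtype.val hc⟩
  obtain ⟨c, hc⟩ := hmem 1 hone
  obtain ⟨d, rfl⟩ := hmem h hh
  have hci := congrFun hc i
  have hcj := congrFun hc j
  simp only [Pi.smul_apply, smul_eq_mul, Pi.one_apply] at hci hcj ⊢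
  have hc0 : c ≠ 0 := by rintro rfl; simp at hci
  rw [mul_left_cancel₀ hc0 (hci.trans hcj.symm)]

lemma vecMul_tailProd {n : ℕ} {M : Matrix (Fin n) (Fin n) ℝ} {v : Fin n → ℝ}
    (hv : v ᵥ* M = v) (lam : ℕ → ℝ) {l : ℕ} (hl : l ≤ n) :
    v ᵥ* tailProd M lam l = (∏ k ∈ Finset.Ico l n, (1 - lam k)) • v := by
  induction hl using Nat.decreasingInduction with
  | self => simp [tailProd_self]
  | of_succ k hk ih =>
    rw [tailProd_eq _ _ hk, vecMul_sub, vecMul_smul, ← vecMul_vecMul, hv, ih,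
      Finset.prod_eq_prod_Ico_succ_bot hk, smul_smul, ← sub_smul]
    congr 1
    ring

/-- The last product of nodes is a multiple of the equilibrium matrix. -/
lemma tailProd_one_apply {n : ℕ} {M : Matrix (Fin (n + 1)) (Fin (n + 1)) ℝ} {lam : ℕ → ℝ}
    (hchar : M.charpoly = newtonPoly lam (n + 1)) (h0 : lam 0 = 1)
    (hlam : ∀ i < n, lam (i + 1) ≠ 1) (hM : ∀ i, ∑ j, M i j = 1) {v : Fin (n + 1) → ℝ}
    (hv1 : ∑ i, v i = 1) (hv : v ᵥ* M = v) (i j : Fin (n + 1)) :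
    M * tailProd M lam 1 = tailProd M lam 1 ∧
    tailProd M lam 1 i j = (∏ k ∈ Finset.Ico 1 (n + 1), (1 - lam k)) * v j := by
  have hMG : M * tailProd M lam 1 = tailProd M lam 1 := by
    have h := tailProd_eq M lam n.succ_pos
    rw [tailProd_zero hchar, h0, one_smul, zero_add] at h
    exact (sub_eq_zero.1 h.symm)
  refine ⟨hMG, ?_⟩
  have hconst : ∀ k, tailProd M lam 1 k j = tailProd M lam 1 i j := fun k =>
    fixed_eq_const hchar h0 hlam hM (h := fun k => tailProd M lam 1 k j)
      (funext fun k => congrFun (congrFun hMG k) j) k i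
  have h := congrFun (vecMul_tailProd hv lam (l := 1) (by omega)) j
  simpa [vecMul, dotProduct, hconst, ← Finset.sum_mul, hv1] using h

/-- Comparison of the pure birth chain with success probabilities `1 - lam i` with its
equilibrium, through the exponential moment at `θ`. -/
lemma pow_mul_tailProd_ge {n : ℕ} {M : Matrix (Fin (n + 1)) (Fin (n + 1)) ℝ} {lam : ℕ → ℝ}
    (hchar : M.charpoly = newtonPoly lam (n + 1)) (h0 : lam 0 = 1) {r : ℝ}
    (hr0 : 0 ≤ r) (hr : r < 1)
    (hlam : ∀ i < n, 0 ≤ lam (i + 1) ∧ lam (i + 1) ≤ r) (hM : ∀ i, ∑ j, M i j = 1)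
    (hG : ∀ l < n + 1, ∀ i j, 0 ≤ tailProd M lam (l + 1) i j)
    {v : Fin (n + 1) → ℝ} (hv0 : ∀ i, 0 ≤ v i) (hv1 : ∑ i, v i = 1) (hv : v ᵥ* M = v)
    {θ : ℝ} (hθ0 : 0 < θ) (hθ1 : θ ≤ 1) (t : ℕ) {m : ℕ} (hm : m ≤ n) (i j : Fin (n + 1)) :
    (∏ k ∈ Finset.Ico (m + 1) (n + 1), (1 - lam k)) *
        (1 - (1 - (1 - r) * (1 - θ)) ^ t * (θ * θ⁻¹ ^ m)) * v j ≤
      (M ^ t * tailProd M lam (m + 1)) i j := by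
  have hne : ∀ i < n, lam (i + 1) ≠ 1 := fun i hi h => by linarith [(hlam i hi).2]
  have hR : ∀ m, 0 ≤ ∏ k ∈ Finset.Ico (m + 1) (n + 1), (1 - lam k) := fun m =>
    Finset.prod_nonneg fun k hk => by
      obtain ⟨hk1, hk2⟩ := Finset.mem_Ico.1 hk
      obtain ⟨k, rfl⟩ : ∃ k', k = k' + 1 := ⟨k - 1, by omega⟩
      linarith [(hlam k (by omega)).2]
  have hρ0 : 0 ≤ 1 - (1 - r) * (1 - θ) := by nlinarith
  have hzero : ∀ t i j, (∏ k ∈ Finset.Ico (0 + 1) (n + 1), (1 - lam k)) *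
      (1 - (1 - (1 - r) * (1 - θ)) ^ t * (θ * θ⁻¹ ^ 0)) * v j ≤
        (M ^ t * tailProd M lam (0 + 1)) i j := by
    intro t i j
    have hMt : M ^ t * tailProd M lam (0 + 1) = tailProd M lam (0 + 1) := by
      induction t with
      | zero => rw [pow_zero, one_mul]
      | succ t ih =>
        rw [pow_succ, mul_assoc, (tailProd_one_apply hchar h0 hne hM hv1 hv i j).1, ih]
    rw [hMt, (tailProd_one_apply hchar h0 hne hM hv1 hv i j).2]
    refine mul_le_mul_of_nonneg_right (mul_le_of_le_one_right (hR 0) ?_) (hv0 j)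
    exact sub_le_self _ (by positivity)
  induction t generalizing m i j with
  | zero =>
    rcases m with _ | m
    · exact hzero 0 i j
    · rw [pow_zero, one_mul, pow_zero, one_mul]
      refine le_trans ?_ (hG (m + 1) (by omega) i j)
      refine mul_nonpos_of_nonpos_of_nonneg
        (mul_nonpos_of_nonneg_of_nonpos (hR (m + 1)) ?_) (hv0 j)
      rw [pow_succ', mul_inv_cancel_left₀ hθ0.ne', sub_nonpos]
      exact one_le_pow₀ ((one_le_inv₀ hθ0).2 hθ1)
  | succ t ih =>
    rcases m with _ | m
    · exact hzero (t + 1) i j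
    · have hM' : M * tailProd M lam (m + 1 + 1)
          = tailProd M lam (m + 1) + lam (m + 1) • tailProd M lam (m + 1 + 1) := by
        rw [tailProd_eq M lam (show m + 1 < n + 1 by omega), sub_add_cancel]
      obtain ⟨hl0, hlr⟩ := hlam m (by omega)
      have h1 := ih (m := m) (by omega) i j
      have h2 := mul_le_mul_of_nonneg_left (ih hm i j) hl0
      rw [pow_succ M, mul_assoc (M ^ t), hM', mul_add, mul_smul_comm, Matrix.add_apply,
        Matrix.smul_apply, smul_eq_mul]
      refine le_trans ?_ (add_le_add h1 h2)
      rw [Finset.prod_eq_prod_Ico_succ_bot (show m + 1 < n + 1 by omega)]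
      have hR' := hR (m + 1)
      set R := ∏ k ∈ Finset.Ico (m + 1 + 1) (n + 1), (1 - lam k)
      have he : 0 ≤ (1 - (1 - r) * (1 - θ)) ^ t * (θ * θ⁻¹ ^ (m + 1)) := by positivity
      have hθm : θ * θ⁻¹ ^ m = θ * (θ * θ⁻¹ ^ (m + 1)) := by
        rw [pow_succ', mul_inv_cancel_left₀ hθ0.ne']
      rw [hθm, pow_succ (1 - (1 - r) * (1 - θ)) t]
      set T := θ * θ⁻¹ ^ (m + 1)
      set ρt := (1 - (1 - r) * (1 - θ)) ^ t
      have hkey : 0 ≤ R * v j * (ρt * T) * ((r - lam (m + 1)) * (1 - θ)) :=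
        mul_nonneg (mul_nonneg (mul_nonneg hR' (hv0 j)) he)
          (mul_nonneg (sub_nonneg.2 hlr) (sub_nonneg.2 hθ1))
      linarith [hkey, show (R * (1 - ρt * (1 - (1 - r) * (1 - θ)) * T) * v j)
        + R * v j * (ρt * T) * ((r - lam (m + 1)) * (1 - θ))
        = (1 - lam (m + 1)) * R * (1 - ρt * (θ * T)) * v j
          + lam (m + 1) * (R * (1 - ρt * T) * v j) by ring]

/-- A Chernoff bound for the lower tail of the binomial distribution. -/
lemma exists_binomial_chernoff {g L a : ℝ} {n t : ℕ} (hg0 : 0 ≤ g) (hg1 : g ≤ 1) (hL : 0 < L)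
    (hn : (n : ℝ) = a) (ht : a + 2 * L + √(2 * a * L) ≤ g * t) :
    ∃ θ : ℝ, 0 < θ ∧ θ ≤ 1 ∧ (1 - g * (1 - θ)) ^ t * θ⁻¹ ^ n ≤ Real.exp (-L) := by
  have ha : 0 ≤ a := hn ▸ n.cast_nonneg
  set μ := g * t with hμ
  set q := √(2 * a * L)
  have hq0 : 0 ≤ q := Real.sqrt_nonneg _
  have hq : q ^ 2 = 2 * a * L := Real.sq_sqrt (by positivity)
  have hμ0 : 0 < μ := by linarith
  set s := (μ - a) / μ with hs
  have hs0 : 0 ≤ s := div_nonneg (by linarith) hμ0.le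
  have hexp : Real.exp (-s) ≤ 1 - s + s ^ 2 / 2 := by
    have h1 := Real.quadratic_le_exp_of_nonneg hs0
    rw [Real.exp_neg]
    refine inv_le_of_inv_le₀ (by nlinarith [sq_nonneg (s - 1)]) (le_trans ?_ h1)
    refine inv_le_of_inv_le₀ (by positivity) ?_
    rw [inv_le_iff_one_le_mul₀ (by positivity)]
    nlinarith [sq_nonneg (s ^ 2)]
  have hθ1 : Real.exp (-s) ≤ 1 := Real.exp_le_one_iff.2 (by linarith)
  refine ⟨Real.exp (-s), Real.exp_pos _, hθ1, ?_⟩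
  have hρ : (1 - g * (1 - Real.exp (-s))) ^ t ≤ Real.exp (-(μ * (1 - Real.exp (-s)))) := by
    have h0 : 0 ≤ 1 - g * (1 - Real.exp (-s)) := by nlinarith [Real.exp_pos (-s)]
    calc (1 - g * (1 - Real.exp (-s))) ^ t
        ≤ Real.exp (-(g * (1 - Real.exp (-s)))) ^ t :=
          pow_le_pow_left₀ h0 (Real.one_sub_le_exp_neg _) t
      _ = _ := by rw [← Real.exp_nat_mul, hμ]; congr 1; ring
  have hpow : (Real.exp (-s))⁻¹ ^ n = Real.exp (a * s) := by
    rw [← Real.exp_neg, neg_neg, ← Real.exp_nat_mul, hn]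
  rw [hpow]
  refine (mul_le_mul_of_nonneg_right hρ (Real.exp_pos _).le).trans ?_
  rw [← Real.exp_add, Real.exp_le_exp]
  have h1 : μ * Real.exp (-s) ≤ μ * (1 - s + s ^ 2 / 2) := mul_le_mul_of_nonneg_left hexp hμ0.le
  have h2 : μ * s = μ - a := mul_div_cancel₀ _ hμ0.ne'
  have h3 : 2 * L ≤ (μ - a) * s := by
    rw [hs, ← mul_div_assoc, le_div_iff₀ hμ0]
    nlinarith [mul_nonneg (sub_nonneg.2 ht) hq0, mul_nonneg (sub_nonneg.2 ht) (sub_nonneg.2 ht),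
      mul_nonneg (sub_nonneg.2 ht) hL.le, mul_nonneg hq0 hL.le]
  have h4 : μ * s ^ 2 = (μ - a) * s := by rw [← h2]; ring
  have h5 : a * s = μ * s - (μ - a) * s := by ring
  linarith

lemma half_sum_abs_sub_le {ι : Type*} [Fintype ι] {f v : ι → ℝ} {δ : ℝ} (hδ : 0 ≤ δ)
    (hv0 : ∀ i, 0 ≤ v i) (hf : ∑ i, f i = 1) (hv : ∑ i, v i = 1)
    (h : ∀ i, (1 - δ) * v i ≤ f i) : (1 / 2) * ∑ i, |f i - v i| ≤ δ := by
  have hle : ∀ i, |f i - v i| ≤ f i - v i + 2 * δ * v i := fun i => by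
    have := mul_nonneg hδ (hv0 i)
    exact abs_le.2 ⟨by linarith [h i], by linarith⟩
  have hsum := Finset.sum_le_sum fun i (_ : i ∈ Finset.univ) => hle i
  rw [Finset.sum_add_distrib, Finset.sum_sub_distrib, ← Finset.mul_sum, hf, hv] at hsum
  linarith

lemma pow_row_sum {n : ℕ} {M : Matrix (Fin n) (Fin n) ℝ} (hM : ∀ i, ∑ j, M i j = 1) (t : ℕ)
    (i : Fin n) : ∑ j, (M ^ t) i j = 1 := by
  suffices h : M ^ t *ᵥ 1 = (1 : Fin n → ℝ) by simpa [mulVec, dotProduct] using congrFun h i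
  have hone : M *ᵥ 1 = 1 := by ext k; simp [mulVec, dotProduct, hM]
  induction t with
  | zero => simp
  | succ t ih => rw [pow_succ, ← mulVec_mulVec, hone, ih]

end Mixing

/-- Theorem 1.3 of the paper (general reversible case, eigenvalues may be negative):
for reversible `P` on `N` states with absolute spectral gap `1 - βs > 0`,
`t_mix(ε) ≤ 2 (N + 2 log ε⁻¹ - 1 + √(2(N-2) log ε⁻¹)) · t_rel`. -/
theorem mixing_time_reversible (N : ℕ) (hN : 2 ≤ N)
    (P : Matrix (Fin N) (Fin N) ℝ) (hPcl : P ∈ RevClosure N)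
    (piv : Fin N → ℝ) (hpiv0 : ∀ i, 0 ≤ piv i) (hpiv1 : ∑ i, piv i = 1)
    (hstat : ∀ j, ∑ i, piv i * P i j = piv j)
    (hrev : ∀ i j, piv i * P i j = piv j * P j i)
    (β : Fin N → ℝ)
    (hchar : P.charpoly = ∏ j, (Polynomial.X - Polynomial.C (β j)))
    (hβlast : ∀ j : Fin N, (j : ℕ) = N - 1 → β j = 1)
    (βs : ℝ) (hβ : ∀ j : Fin N, (j : ℕ) < N - 1 → |β j| ≤ βs)
    (hβs0 : 0 ≤ βs) (hβs1 : βs < 1)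
    (ε : ℝ) (hε0 : 0 < ε) (hε1 : ε < 1) :
    ((sInf {t : ℕ | ∀ x, (1 / 2) * ∑ y, |(P ^ t) x y - piv y| ≤ ε} : ℕ) : ℝ) ≤
      2 * ((N : ℝ) + 2 * Real.log ε⁻¹ - 1
          + Real.sqrt (2 * ((N - 2 : ℕ) : ℝ) * Real.log ε⁻¹)) * (1 / (1 - βs)) := by
  obtain ⟨a, rfl⟩ : ∃ a, N = a + 2 := ⟨N - 2, by omega⟩
  obtain ⟨hrow, lam, hanti, hlamchar, hG⟩ := exists_nodes_of_mem_revClosure hPcl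
  have hstatP : Matrix.vecMul piv P = piv := funext fun j => hstat j
  have hrow2 : ∀ i, ∑ j, (P * P) i j = 1 := fun i => by
    simpa [sq] using pow_row_sum hrow 2 i
  have hstat2 : Matrix.vecMul piv (P * P) = piv := by
    rw [← Matrix.vecMul_vecMul, hstatP, hstatP]
  have hsq : ∀ j : Fin (a + 1), β j.castSucc ^ 2 ≤ βs := fun j => by
    have h := hβ j.castSucc (by simpa using Nat.lt_succ_iff.1 j.2)
    have h0 := abs_nonneg (β j.castSucc)
    rw [← sq_abs]
    nlinarith
  have hpoly : newtonPoly lam (a + 1 + 1)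
      = (Polynomial.X - Polynomial.C 1) *
        ∏ j : Fin (a + 1), (Polynomial.X - Polynomial.C (β j.castSucc ^ 2)) := by
    rw [← hlamchar, charpoly_mul_self hchar, Fin.prod_univ_castSucc,
      hβlast (Fin.last (a + 1)) (by simp), one_pow, mul_comm]
  obtain ⟨hlam0, hlam⟩ := nodes_eq hanti (fun j => sq_nonneg _) hsq hβs1 hpoly
  have hL : 0 < Real.log ε⁻¹ := Real.log_pos ((one_lt_inv₀ hε0).2 hε1)
  set L := Real.log ε⁻¹ with hLdef
  have hg : 0 < 1 - βs := sub_pos.2 hβs1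
  set x := (a : ℝ) + 2 * L + √(2 * a * L) with hx
  have hx0 : 0 ≤ x := by positivity
  set t := ⌈x / (1 - βs)⌉₊ with ht
  have hxt : x ≤ (1 - βs) * t := by
    rw [mul_comm, ← div_le_iff₀ hg]; exact Nat.le_ceil _
  obtain ⟨θ, hθ0, hθ1, hθ⟩ :=
    exists_binomial_chernoff hg.le (by linarith) hL (Eq.refl (a : ℝ)) hxt
  rw [hLdef, Real.log_inv, neg_neg, Real.exp_log hε0] at hθ
  have hmem : 2 * t ∈ {t : ℕ | ∀ x, (1 / 2) * ∑ y, |(P ^ t) x y - piv y| ≤ ε} := by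
    intro i
    refine half_sum_abs_sub_le hε0.le hpiv0 (pow_row_sum hrow _ i) hpiv1 fun j => ?_
    have h := pow_mul_tailProd_ge hlamchar hlam0 hβs0 hβs1 hlam hrow2 hG hpiv0 hpiv1 hstat2
      hθ0 hθ1 t le_rfl i j
    rw [Finset.Ico_self, Finset.prod_empty, one_mul, tailProd_self, mul_one, pow_succ',
      mul_inv_cancel_left₀ hθ0.ne', ← sq, ← pow_mul] at h
    exact (mul_le_mul_of_nonneg_right (sub_le_sub_left hθ 1) (hpiv0 j)).trans h
  have hceil : (t : ℝ) ≤ x / (1 - βs) + 1 := (Nat.ceil_lt_add_one (by positivity)).le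
  have hone : 1 ≤ 1 / (1 - βs) := (one_le_div hg).2 (by linarith)
  calc ((sInf {t : ℕ | ∀ x, (1 / 2) * ∑ y, |(P ^ t) x y - piv y| ≤ ε} : ℕ) : ℝ)
      ≤ ((2 * t : ℕ) : ℝ) := Nat.cast_le.2 (Nat.sInf_le hmem)
    _ ≤ 2 * (x / (1 - βs) + 1 / (1 - βs)) := by push_cast; linarith
    _ = _ := by
      rw [hx, Nat.add_sub_cancel]
      push_cast
      ring
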